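/- (Santaló point) Let X ⊂ ℝⁿ be a convex body (compact, convex, with nonempty interior) and ħ > 0. Then there exists a unique point x_S in the interior of X such that the polar body X^ħ(x_S) = (X − x_S)^ħ has centroid 0, and for this point the volume Vol((X − x_S)^ħ) is minimal among Vol((X − x₀)^ħ) over all interior points x₀ of X. -/

import Mathlib

/-!
Let `h` be the support function of `X`. The polar dual of `X - x` is the sublevel set
`{p | h p - ⟪p, x⟫ ≤ ħ}` of a function that is positively homogeneous of degree `1`, so by a layer
cake computation its volume and its first moment are explicit multiples of `∫ exp (⟪p, x⟫ - h p) dp`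
and `∫ exp (⟪p, x⟫ - h p) p dp`. The first of these is the Laplace transform `L x` of the measure
`exp (-h p) dp`, and the second is the gradient of `L` at `x`.

`L` is lower semicontinuous. It is finite at interior points of `X`, where `h p - ⟪p, x⟫` dominates
a multiple of `‖p‖`. It is infinite elsewhere, since a hyperplane separating `x` from `X` has a
normal `u` with `h u ≤ ⟪u, x⟫`, and the integrand does not decrease under translation by `u`.
Hence `L` attains its minimum at an interior point, where its gradient vanishes; and by the strict
convexity of `exp`, any point where the gradient vanishes is the only minimiser.
-/

open MeasureTheory
open scoped RealInnerProductSpace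

/-- The `ħ`-polar dual of a set `Y ⊂ ℝⁿ`: all `p` with `p·y ≤ ħ` for every `y ∈ Y`. -/
def polarDualSet (n : ℕ) (hb : ℝ) (Y : Set (EuclideanSpace ℝ (Fin n))) :
    Set (EuclideanSpace ℝ (Fin n)) :=
  {p | ∀ y ∈ Y, (⟪p, y⟫ : ℝ) ≤ hb}

/-- The centroid `(1/Vol K) ∫_K p dp` of a set `K ⊂ ℝⁿ`. -/
noncomputable def setCentroid (n : ℕ) (K : Set (EuclideanSpace ℝ (Fin n))) :
    EuclideanSpace ℝ (Fin n) :=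
  ((volume K).toReal)⁻¹ • ∫ p in K, p

open Bornology Metric Set Module ProbabilityTheory
open scoped ENNReal Nat Topology Pointwise

section LayerCake

variable {F : Type*} [NormedAddCommGroup F] [NormedSpace ℝ F]

theorem integral_indicator_Ici_exp_neg (a : ℝ) :
    ∫ t, (Ici a).indicator (fun t ↦ Real.exp (-t)) t = Real.exp (-a) := by
  rw [integral_indicator measurableSet_Ici, integral_Ici_eq_integral_Ioi, integral_exp_neg_Ioi]

theorem integrable_indicator_Ici_exp_neg (a : ℝ) :
    Integrable ((Ici a).indicator fun t ↦ Real.exp (-t)) := by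
  rw [integrable_indicator_iff measurableSet_Ici, integrableOn_Ici_iff_integrableOn_Ioi]
  exact integrableOn_exp_neg_Ioi a

theorem integrable_prod_indicator_exp_neg_smul {α : Type*} [MeasurableSpace α] {μ : Measure α}
    [SFinite μ] {g : α → ℝ} {f : α → F} (hg : Measurable g)
    (hf : Integrable (fun a ↦ Real.exp (-g a) • f a) μ) :
    Integrable (fun q : α × ℝ ↦ (Ici (g q.1)).indicator (fun t ↦ Real.exp (-t)) q.2 • f q.1)
      (μ.prod volume) := by
  have hf_meas : AEStronglyMeasurable f μ := by
    refine (AEStronglyMeasurable.smul (f := fun a ↦ Real.exp (g a)) (by fun_prop) hf.1).congr ?_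
    filter_upwards with a
    simp [smul_smul, ← Real.exp_add]
  have hmeas : Measurable fun q : α × ℝ ↦
      (Ici (g q.1)).indicator (fun t ↦ Real.exp (-t)) q.2 := by
    have hset : MeasurableSet {q : α × ℝ | g q.1 ≤ q.2} :=
      measurableSet_le (hg.comp measurable_fst) measurable_snd
    exact Measurable.indicator (f := fun q : α × ℝ ↦ Real.exp (-q.2)) (by fun_prop) hset
  have hprod : AEStronglyMeasurable (fun q : α × ℝ ↦
      (Ici (g q.1)).indicator (fun t ↦ Real.exp (-t)) q.2 • f q.1) (μ.prod volume) :=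
    hmeas.aestronglyMeasurable.smul hf_meas.comp_fst
  refine (integrable_prod_iff hprod).2 ⟨?_, ?_⟩
  · exact .of_forall fun a ↦ (integrable_indicator_Ici_exp_neg (g a)).smul_const (f a)
  · refine hf.norm.congr (.of_forall fun a ↦ ?_)
    have hnonneg (t : ℝ) : 0 ≤ (Ici (g a)).indicator (fun t ↦ Real.exp (-t)) t :=
      indicator_nonneg (fun _ _ ↦ (Real.exp_pos _).le) t
    simp only [norm_smul, Real.norm_of_nonneg (hnonneg _), Real.norm_of_nonneg (Real.exp_pos _).le,
      integral_mul_const, integral_indicator_Ici_exp_neg]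

theorem integral_exp_neg_smul_eq_integral_setIntegral [CompleteSpace F] {α : Type*}
    [MeasurableSpace α] {μ : Measure α} [SFinite μ] {g : α → ℝ} {f : α → F} (hg : Measurable g)
    (hf : Integrable (fun a ↦ Real.exp (-g a) • f a) μ) :
    ∫ a, Real.exp (-g a) • f a ∂μ = ∫ t, Real.exp (-t) • ∫ a in {a | g a ≤ t}, f a ∂μ := by
  calc ∫ a, Real.exp (-g a) • f a ∂μ
      = ∫ a, (∫ t, (Ici (g a)).indicator (fun t ↦ Real.exp (-t)) t • f a) ∂μ := by
        simp only [integral_smul_const, integral_indicator_Ici_exp_neg]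
    _ = ∫ t, ∫ a, (Ici (g a)).indicator (fun t ↦ Real.exp (-t)) t • f a ∂μ :=
        integral_integral_swap (integrable_prod_indicator_exp_neg_smul hg hf)
    _ = ∫ t, Real.exp (-t) • ∫ a in {a | g a ≤ t}, f a ∂μ := by
        congr 1 with t
        rw [← integral_indicator (measurableSet_le hg measurable_const), ← integral_smul]
        congr 1 with a
        by_cases h : g a ≤ t <;> simp [h]

theorem integral_Ioi_exp_neg_mul_pow (m : ℕ) :
    ∫ t in Ioi (0 : ℝ), Real.exp (-t) * t ^ m = m ! := by
  have h := Real.Gamma_eq_integral (s := m + 1) (by positivity)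
  simpa only [add_sub_cancel_right, Real.rpow_natCast, Real.Gamma_nat_eq_factorial] using h.symm

variable {E : Type*} [NormedAddCommGroup E] [NormedSpace ℝ E] [FiniteDimensional ℝ E]
  [MeasurableSpace E] [BorelSpace E] {μ : Measure E} [μ.IsAddHaarMeasure]
  {g : E → ℝ} {f : E → F} {k : ℕ}

theorem setIntegral_sublevel_of_homogeneous (hg : ∀ t : ℝ, 0 < t → ∀ p, g (t • p) = t * g p)
    (hf : ∀ t : ℝ, 0 < t → ∀ p, f (t • p) = t ^ k • f p) {r : ℝ} (hr : 0 < r) :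
    ∫ p in {p | g p ≤ r}, f p ∂μ = r ^ (finrank ℝ E + k) • ∫ p in {p | g p ≤ 1}, f p ∂μ := by
  have hdilate : {p | g p ≤ r} = r • {p | g p ≤ 1} := by
    ext p
    rw [mem_smul_set_iff_inv_smul_mem₀ hr.ne', mem_ofPred_eq, mem_ofPred_eq,
      hg _ (inv_pos.2 hr), inv_mul_le_iff₀ hr, mul_one]
  have hscale := Measure.setIntegral_comp_smul_of_pos μ f {p | g p ≤ 1} hr
  simp only [hf r hr, integral_smul, ← hdilate] at hscale
  rw [pow_add, mul_smul, hscale, smul_inv_smul₀ (pow_pos hr _).ne']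

theorem setIntegral_sublevel_eq_smul_integral_exp_neg [CompleteSpace F] (hg_meas : Measurable g)
    (hg_nonneg : ∀ p, 0 ≤ g p) (hg : ∀ t : ℝ, 0 < t → ∀ p, g (t • p) = t * g p)
    (hf : ∀ t : ℝ, 0 < t → ∀ p, f (t • p) = t ^ k • f p)
    (hint : Integrable (fun p ↦ Real.exp (-g p) • f p) μ) {r : ℝ} (hr : 0 < r) :
    ∫ p in {p | g p ≤ r}, f p ∂μ =
      (r ^ (finrank ℝ E + k) / (finrank ℝ E + k)! : ℝ) • ∫ p, Real.exp (-g p) • f p ∂μ := by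
  have hneg : ∀ t ∉ Ici (0 : ℝ), Real.exp (-t) • ∫ p in {p | g p ≤ t}, f p ∂μ = 0 := by
    intro t ht
    have hempty : {p | g p ≤ t} = ∅ :=
      eq_empty_of_forall_notMem fun p hp ↦ ht ((hg_nonneg p).trans hp)
    simp [hempty]
  have hlayer : ∫ p, Real.exp (-g p) • f p ∂μ =
      ((finrank ℝ E + k)! : ℝ) • ∫ p in {p | g p ≤ 1}, f p ∂μ := by
    rw [integral_exp_neg_smul_eq_integral_setIntegral hg_meas hint,
      ← setIntegral_eq_integral_of_forall_compl_eq_zero hneg, integral_Ici_eq_integral_Ioi,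
      ← integral_Ioi_exp_neg_mul_pow, ← integral_smul_const]
    refine setIntegral_congr_fun measurableSet_Ioi fun t ht ↦ ?_
    simp only [setIntegral_sublevel_of_homogeneous hg hf ht, smul_smul]
  rw [hlayer, smul_smul, div_mul_cancel₀ _ (by positivity),
    setIntegral_sublevel_of_homogeneous hg hf hr]

end LayerCake

section Haar

variable {E : Type*} [MeasurableSpace E] {μ : Measure E}

theorem integrable_exp_neg_mul_norm [NormedAddCommGroup E] [NormedSpace ℝ E]
    [FiniteDimensional ℝ E] [BorelSpace E] [μ.IsAddHaarMeasure] {c : ℝ} (hc : 0 < c) :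
    Integrable (fun p ↦ Real.exp (-(c * ‖p‖))) μ := by
  set m := finrank ℝ E + 1
  have hdecay : Integrable (fun p : E ↦ (1 + ‖p‖) ^ (-(m : ℝ))) μ :=
    integrable_one_add_norm (by simp [m])
  refine (hdecay.const_mul (m ! * Real.exp c / c ^ m)).mono' (by fun_prop) (.of_forall fun p ↦ ?_)
  have hexp := Real.pow_div_factorial_le_exp (c * (1 + ‖p‖)) (by positivity) m
  rw [div_le_iff₀ (by positivity), mul_pow, mul_add, mul_one, Real.exp_add] at hexp
  rw [Real.norm_of_nonneg (Real.exp_pos _).le, Real.rpow_neg (by positivity), Real.rpow_natCast,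
    Real.exp_neg, ← div_eq_mul_inv, div_div, inv_eq_one_div,
    div_le_div_iff₀ (Real.exp_pos _) (by positivity), one_mul]
  linarith

-- The half-space `H = {p | 0 ≤ ⟪p, u⟫}` contains `u +ᵥ H`, and `f` has at least as much mass on
-- `u +ᵥ H` as on `H`; if that mass were finite, the slab between the two would be null.
theorem lintegral_eq_top_of_le_comp_add [NormedAddCommGroup E] [InnerProductSpace ℝ E]
    [BorelSpace E] [μ.IsAddRightInvariant] [μ.IsOpenPosMeasure] {f : E → ℝ≥0∞}
    (hf : Measurable f) (hpos : ∀ p, 0 < f p) {u : E} (hu : u ≠ 0) (hle : ∀ p, f p ≤ f (p + u)) :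
    ∫⁻ p, f p ∂μ = ∞ := by
  set H := {p : E | 0 ≤ ⟪p, u⟫}
  set H' := {p : E | ‖u‖ ^ 2 ≤ ⟪p, u⟫}
  have hH' : MeasurableSet H' := measurableSet_le measurable_const (by fun_prop)
  have hH'H : H' ⊆ H := fun p hp ↦ (sq_nonneg ‖u‖).trans hp
  have hpreim : (· + u) ⁻¹' H' = H := by
    ext p
    simp [H, H', inner_add_left]
  have hmass : ∫⁻ p in H, f p ∂μ ≤ ∫⁻ p in H', f p ∂μ := calc
    _ ≤ ∫⁻ p in H, f (p + u) ∂μ := lintegral_mono hle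
    _ = ∫⁻ p in H', f p ∂μ := by
      rw [← hpreim]
      exact (measurePreserving_add_right μ u).setLIntegral_comp_preimage hH' hf
  have hslab : 0 < ∫⁻ p in H \ H', f p ∂μ := by
    have hopen : IsOpen {p : E | 0 < ⟪p, u⟫ ∧ ⟪p, u⟫ < ‖u‖ ^ 2} :=
      (isOpen_lt (f := fun _ ↦ (0 : ℝ)) continuous_const (by fun_prop)).inter
        (isOpen_lt (g := fun _ ↦ ‖u‖ ^ 2) (by fun_prop) continuous_const)
    have hmid : (2⁻¹ : ℝ) • u ∈ {p : E | 0 < ⟪p, u⟫ ∧ ⟪p, u⟫ < ‖u‖ ^ 2} := by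
      have : 0 < ‖u‖ ^ 2 := by positivity
      simp only [mem_ofPred_eq, real_inner_smul_left, real_inner_self_eq_norm_sq]
      constructor <;> linarith
    rw [setLIntegral_pos_iff hf, Function.support_eq_univ fun p ↦ (hpos p).ne', univ_inter]
    exact (hopen.measure_pos μ ⟨_, hmid⟩).trans_le
      (measure_mono fun p hp ↦ ⟨hp.1.le, not_le.2 hp.2⟩)
  by_contra hfin
  have hfin' : ∫⁻ p in H', f p ∂μ ≠ ∞ := ne_top_of_le_ne_top hfin (setLIntegral_le_lintegral _ _)
  refine (ENNReal.lt_add_right hfin' hslab.ne').not_ge ?_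
  rwa [← lintegral_inter_add_sdiff f H hH', inter_eq_self_of_subset_right hH'H] at hmass

end Haar

section Laplace

variable {E : Type*} [NormedAddCommGroup E] [InnerProductSpace ℝ E] [MeasurableSpace E]
  {ν : Measure E} {x : E}

/-- The two-sided Laplace transform of a measure, with values in `[0, ∞]`. -/
noncomputable def laplaceTransform (ν : Measure E) (x : E) : ℝ≥0∞ :=
  ∫⁻ p, ENNReal.ofReal (Real.exp ⟪p, x⟫) ∂ν

theorem laplaceTransform_zero : laplaceTransform ν 0 = ν univ := by
  simp [laplaceTransform]

section

variable [OpensMeasurableSpace E]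

theorem lowerSemicontinuous_laplaceTransform : LowerSemicontinuous (laplaceTransform ν) := by
  refine lowerSemicontinuous_iff_le_liminf.2 fun x ↦ ?_
  have hcont (p : E) : Continuous fun y ↦ ENNReal.ofReal (Real.exp ⟪p, y⟫) :=
    ENNReal.continuous_ofReal.comp (by fun_prop)
  calc laplaceTransform ν x
      = ∫⁻ p, Filter.liminf (fun y ↦ ENNReal.ofReal (Real.exp ⟪p, y⟫)) (𝓝 x) ∂ν :=
        lintegral_congr fun p ↦ ((hcont p).tendsto x).liminf_eq.symm
    _ ≤ Filter.liminf (laplaceTransform ν) (𝓝 x) :=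
        lintegral_liminf_le fun y ↦ by fun_prop

theorem laplaceTransform_ne_top_iff :
    laplaceTransform ν x ≠ ∞ ↔ Integrable (fun p ↦ Real.exp ⟪p, x⟫) ν :=
  lintegral_ofReal_ne_top_iff_integrable (by fun_prop) (.of_forall fun _ ↦ (Real.exp_pos _).le)

theorem toReal_laplaceTransform :
    (laplaceTransform ν x).toReal = ∫ p, Real.exp ⟪p, x⟫ ∂ν :=
  (integral_eq_lintegral_of_nonneg_ae (.of_forall fun _ ↦ (Real.exp_pos _).le)
    (by fun_prop)).symm

theorem mgf_inner_eq_toReal_laplaceTransform (v : E) (t : ℝ) :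
    mgf (fun p ↦ ⟪p, v⟫) ν t = (laplaceTransform ν (t • v)).toReal := by
  simp only [mgf, toReal_laplaceTransform, real_inner_smul_right]

theorem zero_mem_interior_integrableExpSet_inner
    (h : 0 ∈ interior {x | laplaceTransform ν x ≠ ∞}) (v : E) :
    0 ∈ interior (integrableExpSet (fun p ↦ ⟪p, v⟫) ν) := by
  have hline : Filter.Tendsto (fun t : ℝ ↦ t • v) (𝓝 0) (𝓝 0) :=
    Continuous.tendsto' (by fun_prop) _ _ (zero_smul ℝ v)
  refine mem_interior_iff_mem_nhds.2 ?_
  filter_upwards [hline (mem_interior_iff_mem_nhds.1 h)] with t ht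
  simpa only [integrableExpSet, mem_ofPred_eq, real_inner_smul_right]
    using laplaceTransform_ne_top_iff.1 ht

end

theorem integrable_id_of_laplaceTransform_ne_top [FiniteDimensional ℝ E] [BorelSpace E]
    (h : 0 ∈ interior {x | laplaceTransform ν x ≠ ∞}) : Integrable (fun p ↦ p) ν := by
  have hcoord (v : E) : Integrable (fun p ↦ ⟪p, v⟫) ν :=
    integrable_of_mem_interior_integrableExpSet (zero_mem_interior_integrableExpSet_inner h v)
  let b := stdOrthonormalBasis ℝ E
  have hsum : Integrable (fun p ↦ ∑ i, ⟪p, b i⟫ • b i) ν :=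
    integrable_finsetSum _ fun i _ ↦ (hcoord (b i)).smul_const (b i)
  refine hsum.congr (.of_forall fun p ↦ ?_)
  simpa only [real_inner_comm p] using b.sum_repr' p

theorem integral_id_eq_zero_of_isMinOn_laplaceTransform [FiniteDimensional ℝ E] [BorelSpace E]
    (h : 0 ∈ interior {x | laplaceTransform ν x ≠ ∞})
    (hmin : ∀ x, laplaceTransform ν 0 ≤ laplaceTransform ν x) : ∫ p, p ∂ν = 0 := by
  refine ext_inner_left ℝ fun v ↦ ?_
  have hexp := zero_mem_interior_integrableExpSet_inner h v
  have hlocal : IsLocalMin (mgf (fun p ↦ ⟪p, v⟫) ν) 0 := by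
    filter_upwards [mem_interior_iff_mem_nhds.1 hexp] with t ht
    simp only [mgf_inner_eq_toReal_laplaceTransform, zero_smul]
    refine ENNReal.toReal_mono (laplaceTransform_ne_top_iff.2 ?_) (hmin _)
    simpa only [integrableExpSet, mem_ofPred_eq, real_inner_smul_right] using ht
  calc ⟪v, ∫ p, p ∂ν⟫ = ∫ p, ⟪p, v⟫ ∂ν := by
        simp only [← integral_inner (integrable_id_of_laplaceTransform_ne_top h), real_inner_comm]
    _ = 0 := by rw [← deriv_mgf_zero hexp, hlocal.deriv_eq_zero]
    _ = ⟪v, 0⟫ := (inner_zero_right v).symm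

-- Jensen's inequality for `exp` in its tangent-line form `1 + s < exp s`.
theorem laplaceTransform_zero_lt_of_integral_id_eq_zero [CompleteSpace E] [BorelSpace E]
    [IsFiniteMeasure ν] [ν.IsOpenPosMeasure] (hint : Integrable (fun p ↦ p) ν)
    (hzero : ∫ p, p ∂ν = 0) (hx : x ≠ 0) : laplaceTransform ν 0 < laplaceTransform ν x := by
  by_cases hfin : laplaceTransform ν x = ∞
  · simp [hfin, laplaceTransform_zero]
  have hexp : Integrable (fun p ↦ Real.exp ⟪p, x⟫) ν := laplaceTransform_ne_top_iff.1 hfin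
  have hinner : Integrable (fun p ↦ ⟪p, x⟫) ν := hint.inner_const x
  have haffine : Integrable (fun p ↦ ⟪p, x⟫ + 1) ν := hinner.add (integrable_const 1)
  have htangent : ∫ p, (⟪p, x⟫ + 1) ∂ν = ν.real univ := by
    rw [integral_add hinner (integrable_const 1)]
    simp only [real_inner_comm x, integral_inner hint, hzero]
    simp
  have hgap : 0 < ∫ p, (Real.exp ⟪p, x⟫ - (⟪p, x⟫ + 1)) ∂ν := by
    have hopen : IsOpen {p : E | ⟪p, x⟫ ≠ 0} := isOpen_ne_fun (by fun_prop) continuous_const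
    rw [integral_pos_iff_support_of_nonneg
      (fun p ↦ sub_nonneg.2 (Real.add_one_le_exp _)) (hexp.sub haffine)]
    refine (hopen.measure_pos ν ⟨x, inner_self_ne_zero.2 hx⟩).trans_le (measure_mono fun p hp ↦ ?_)
    exact (sub_pos.2 (Real.add_one_lt_exp hp)).ne'
  rw [integral_sub hexp haffine, htangent, sub_pos,
    ← toReal_laplaceTransform] at hgap
  rw [laplaceTransform_zero]
  exact (ENNReal.toReal_lt_toReal (measure_ne_top ν univ) hfin).1 hgap

end Laplace

section Translation

variable {E : Type*} [SeminormedAddCommGroup E] {X : Set E}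

theorem isBounded_image_sub (hX : IsBounded X) (x : E) : IsBounded ((fun y ↦ y - x) '' X) :=
  (IsometryEquiv.subRight x).isometry.lipschitz.isBounded_image hX

theorem zero_mem_interior_image_sub {x : E} (hx : x ∈ interior X) :
    0 ∈ interior ((fun y ↦ y - x) '' X) := by
  have himage := (Homeomorph.subRight x).image_interior X
  exact himage ▸ ⟨x, hx, sub_self x⟩

end Translation

section SupportFunction

variable {E : Type*} [NormedAddCommGroup E] [InnerProductSpace ℝ E] {X : Set E} {x : E}

/-- The support function `p ↦ sup_{y ∈ X} ⟪p, y⟫`. As a real supremum it is `0` where the values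
are unbounded or `X` is empty, so it is meaningful only for bounded nonempty `X`. -/
noncomputable def supportFun (X : Set E) (p : E) : ℝ :=
  ⨆ y : X, ⟪p, (y : E)⟫

theorem bddAbove_range_inner_of_isBounded (hX : IsBounded X) (p : E) :
    BddAbove (range fun y : X ↦ ⟪p, (y : E)⟫) := by
  have himage := (innerSL ℝ p).lipschitz.isBounded_image hX
  rw [image_eq_range] at himage
  exact himage.bddAbove

theorem inner_le_supportFun (hX : IsBounded X) {y : E} (hy : y ∈ X) (p : E) :
    ⟪p, y⟫ ≤ supportFun X p :=
  le_ciSup (bddAbove_range_inner_of_isBounded hX p) ⟨y, hy⟩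

theorem supportFun_le_iff (hX : IsBounded X) (hne : X.Nonempty) {p : E} {c : ℝ} :
    supportFun X p ≤ c ↔ ∀ y ∈ X, ⟪p, y⟫ ≤ c := by
  have := hne.to_subtype
  rw [supportFun, ciSup_le_iff (bddAbove_range_inner_of_isBounded hX p), SetCoe.forall]

theorem supportFun_smul {t : ℝ} (ht : 0 ≤ t) (p : E) :
    supportFun X (t • p) = t * supportFun X p := by
  simp only [supportFun, real_inner_smul_left, Real.mul_iSup_of_nonneg ht]

theorem supportFun_add_le (hX : IsBounded X) (hne : X.Nonempty) (p q : E) :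
    supportFun X (p + q) ≤ supportFun X p + supportFun X q := by
  refine (supportFun_le_iff hX hne).2 fun y hy ↦ ?_
  rw [inner_add_left]
  exact add_le_add (inner_le_supportFun hX hy p) (inner_le_supportFun hX hy q)

theorem supportFun_image_sub (hX : IsBounded X) (hne : X.Nonempty) (x p : E) :
    supportFun ((fun y ↦ y - x) '' X) p = supportFun X p - ⟪p, x⟫ := by
  refine eq_of_forall_ge_iff fun c ↦ ?_
  rw [supportFun_le_iff (isBounded_image_sub hX x) (hne.image _), sub_le_iff_le_add,
    supportFun_le_iff hX hne]
  simp only [forall_mem_image, inner_sub_right, sub_le_iff_le_add]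

theorem measurable_supportFun [MeasurableSpace E] [OpensMeasurableSpace E] (hX : IsBounded X) :
    Measurable (supportFun X) := by
  have hlsc : LowerSemicontinuous (supportFun X) :=
    lowerSemicontinuous_ciSup (bddAbove_range_inner_of_isBounded hX) fun y ↦
      Continuous.lowerSemicontinuous (by fun_prop)
  exact hlsc.measurable

theorem inner_add_mul_norm_le_supportFun (hX : IsBounded X) {δ : ℝ} (hδ : 0 ≤ δ)
    (hball : closedBall x δ ⊆ X) (p : E) : ⟪p, x⟫ + δ * ‖p‖ ≤ supportFun X p := by
  have hmem : x + (δ / ‖p‖) • p ∈ closedBall x δ := by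
    rw [mem_closedBall_iff_norm, add_sub_cancel_left, norm_smul, norm_div, norm_norm,
      Real.norm_of_nonneg hδ]
    rw [div_mul_eq_mul_div, mul_div_assoc]
    exact mul_le_of_le_one_right hδ (div_self_le_one ‖p‖)
  calc ⟪p, x⟫ + δ * ‖p‖ = ⟪p, x + (δ / ‖p‖) • p⟫ := by
        rw [inner_add_right, real_inner_smul_right, real_inner_self_eq_norm_mul_norm,
          div_mul_eq_mul_div, mul_div_assoc, mul_self_div_self]
    _ ≤ supportFun X p := inner_le_supportFun hX (hball hmem) p

end SupportFunction

section Polar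

variable {E : Type*} [NormedAddCommGroup E] [InnerProductSpace ℝ E]

/-- The polar dual `{p | ⟪p, y⟫ ≤ r for all y ∈ Y}` in an arbitrary real inner product space;
`polarDualSet` is the case of `EuclideanSpace ℝ (Fin n)`. -/
def polarDual (r : ℝ) (Y : Set E) : Set E :=
  {p | ∀ y ∈ Y, ⟪p, y⟫ ≤ r}

variable {X Y : Set E} {x : E} {r : ℝ}

theorem polarDual_eq_supportFun_le (hY : IsBounded Y) (hne : Y.Nonempty) :
    polarDual r Y = {p | supportFun Y p ≤ r} := by
  simp only [polarDual, supportFun_le_iff hY hne]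

theorem isBounded_polarDual (h0 : 0 ∈ interior Y) : IsBounded (polarDual r Y) := by
  obtain ⟨δ, hδ, hball⟩ := nhds_basis_closedBall.mem_iff.1 (mem_interior_iff_mem_nhds.1 h0)
  refine isBounded_iff_forall_norm_le.2 ⟨r / δ, fun p hp ↦ (le_div_iff₀' hδ).2 ?_⟩
  have hsupp : supportFun (closedBall 0 δ) p ≤ r :=
    (supportFun_le_iff isBounded_closedBall (nonempty_closedBall.2 hδ.le)).2
      fun y hy ↦ hp y (hball hy)
  simpa using (inner_add_mul_norm_le_supportFun isBounded_closedBall hδ.le Subset.rfl p).trans hsupp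

variable [MeasurableSpace E] {μ : Measure E}

/-- The measure `exp (-h) μ`, where `h` is the support function of `X`. Its Laplace transform at
an interior point `x` is, up to a constant, the volume of the polar dual of `X - x`. -/
noncomputable def polarMeasure (μ : Measure E) (X : Set E) : Measure E :=
  μ.withDensity fun p ↦ ENNReal.ofReal (Real.exp (-supportFun X p))

section

variable [OpensMeasurableSpace E]

theorem isOpenPosMeasure_polarMeasure [μ.IsOpenPosMeasure] (hX : IsBounded X) :
    (polarMeasure μ X).IsOpenPosMeasure := by
  have hmeas := measurable_supportFun hX
  refine (withDensity_absolutelyContinuous' (by fun_prop) (.of_forall fun p ↦ ?_)).isOpenPosMeasure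
  exact (ENNReal.ofReal_pos.2 (Real.exp_pos _)).ne'

theorem laplaceTransform_polarMeasure (hX : IsBounded X) (x : E) :
    laplaceTransform (polarMeasure μ X) x =
      ∫⁻ p, ENNReal.ofReal (Real.exp (⟪p, x⟫ - supportFun X p)) ∂μ := by
  have hmeas := measurable_supportFun hX
  rw [laplaceTransform, polarMeasure,
    lintegral_withDensity_eq_lintegral_mul _ (by fun_prop) (by fun_prop)]
  refine lintegral_congr fun p ↦ ?_
  rw [Pi.mul_apply, ← ENNReal.ofReal_mul (Real.exp_pos _).le, ← Real.exp_add, neg_add_eq_sub]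

theorem laplaceTransform_polarMeasure_image_sub (hX : IsBounded X) (hne : X.Nonempty) (x z : E) :
    laplaceTransform (polarMeasure μ ((fun y ↦ y - x) '' X)) z =
      laplaceTransform (polarMeasure μ X) (x + z) := by
  simp only [laplaceTransform_polarMeasure hX,
    laplaceTransform_polarMeasure (isBounded_image_sub hX x), supportFun_image_sub hX hne,
    inner_add_right, sub_sub_eq_add_sub, add_comm]

theorem integral_polarMeasure {F : Type*} [NormedAddCommGroup F] [NormedSpace ℝ F]
    (hX : IsBounded X) (f : E → F) :
    ∫ p, f p ∂polarMeasure μ X = ∫ p, Real.exp (-supportFun X p) • f p ∂μ := by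
  have hmeas := measurable_supportFun hX
  rw [polarMeasure, integral_withDensity_eq_integral_toReal_smul (by fun_prop)
    (.of_forall fun _ ↦ ENNReal.ofReal_lt_top)]
  simp only [ENNReal.toReal_ofReal (Real.exp_pos _).le]

theorem integrable_polarMeasure_iff {F : Type*} [NormedAddCommGroup F] [NormedSpace ℝ F]
    (hX : IsBounded X) {f : E → F} :
    Integrable f (polarMeasure μ X) ↔
      Integrable (fun p ↦ Real.exp (-supportFun X p) • f p) μ := by
  have hmeas := measurable_supportFun hX
  rw [polarMeasure, integrable_withDensity_iff_integrable_smul' (by fun_prop)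
    (.of_forall fun _ ↦ ENNReal.ofReal_lt_top)]
  simp only [ENNReal.toReal_ofReal (Real.exp_pos _).le]

end

variable [FiniteDimensional ℝ E] [BorelSpace E] [μ.IsAddHaarMeasure]

theorem laplaceTransform_polarMeasure_ne_top (hX : IsBounded X) (hx : x ∈ interior X) :
    laplaceTransform (polarMeasure μ X) x ≠ ∞ := by
  obtain ⟨δ, hδ, hball⟩ := nhds_basis_closedBall.mem_iff.1 (mem_interior_iff_mem_nhds.1 hx)
  rw [laplaceTransform_polarMeasure hX]
  refine ne_top_of_le_ne_top (integrable_exp_neg_mul_norm (μ := μ) hδ).lintegral_lt_top.ne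
    (lintegral_mono fun p ↦ ENNReal.ofReal_le_ofReal (Real.exp_le_exp.2 ?_))
  linarith [inner_add_mul_norm_le_supportFun hX hδ.le hball p]

theorem laplaceTransform_polarMeasure_eq_top (hX : IsBounded X) (hconv : Convex ℝ X)
    (hint : (interior X).Nonempty) (hx : x ∉ interior X) :
    laplaceTransform (polarMeasure μ X) x = ∞ := by
  have hne := hint.mono interior_subset
  obtain ⟨l, hl0, hl⟩ := geometric_hahn_banach_of_nonempty_interior_point hconv hx hint
  obtain ⟨u, rfl⟩ := (InnerProductSpace.toDual ℝ E).surjective l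
  have hu : u ≠ 0 := by simpa using hl0
  have hsupp : supportFun X u ≤ ⟪u, x⟫ := (supportFun_le_iff hX hne).2 hl
  have hmeas := measurable_supportFun hX
  rw [laplaceTransform_polarMeasure hX]
  refine lintegral_eq_top_of_le_comp_add (by fun_prop)
    (fun p ↦ ENNReal.ofReal_pos.2 (Real.exp_pos _)) hu
    fun p ↦ ENNReal.ofReal_le_ofReal (Real.exp_le_exp.2 ?_)
  rw [inner_add_left]
  linarith [supportFun_add_le hX hne p u]

theorem exists_forall_laplaceTransform_polarMeasure_le (hX : IsBounded X) (hconv : Convex ℝ X)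
    (hint : (interior X).Nonempty) :
    ∃ x ∈ interior X, ∀ y,
      laplaceTransform (polarMeasure μ X) x ≤ laplaceTransform (polarMeasure μ X) y := by
  have hlsc : LowerSemicontinuousOn (laplaceTransform (polarMeasure μ X)) (closure X) :=
    lowerSemicontinuous_laplaceTransform.lowerSemicontinuousOn _
  obtain ⟨x, -, hmin⟩ := hlsc.exists_isMinOn
    (hint.mono (interior_subset.trans subset_closure)) hX.isCompact_closure
  have hle {y : E} (hy : y ∈ interior X) :
      laplaceTransform (polarMeasure μ X) x ≤ laplaceTransform (polarMeasure μ X) y :=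
    hmin (subset_closure (interior_subset hy))
  refine ⟨x, ?_, fun y ↦ ?_⟩
  · obtain ⟨z, hz⟩ := hint
    by_contra hx
    refine ne_top_of_le_ne_top (laplaceTransform_polarMeasure_ne_top hX hz) (hle hz) ?_
    exact laplaceTransform_polarMeasure_eq_top hX hconv ⟨z, hz⟩ hx
  · by_cases hy : y ∈ interior X
    · exact hle hy
    · simp [laplaceTransform_polarMeasure_eq_top hX hconv hint hy]

theorem isFiniteMeasure_polarMeasure (hY : IsBounded Y) (h0 : 0 ∈ interior Y) :
    IsFiniteMeasure (polarMeasure μ Y) :=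
  ⟨by simpa only [laplaceTransform_zero]
    using (laplaceTransform_polarMeasure_ne_top hY h0).lt_top⟩

theorem zero_mem_interior_laplaceTransform_polarMeasure_ne_top (hY : IsBounded Y)
    (h0 : 0 ∈ interior Y) : 0 ∈ interior {x | laplaceTransform (polarMeasure μ Y) x ≠ ∞} :=
  interior_maximal (fun _ ↦ laplaceTransform_polarMeasure_ne_top hY) isOpen_interior h0

theorem setIntegral_polarDual {F : Type*} [NormedAddCommGroup F] [NormedSpace ℝ F]
    [CompleteSpace F] (hY : IsBounded Y) (h0 : 0 ∈ Y) (hr : 0 < r) {f : E → F} {k : ℕ}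
    (hf : ∀ t : ℝ, 0 < t → ∀ p, f (t • p) = t ^ k • f p)
    (hint : Integrable f (polarMeasure μ Y)) :
    ∫ p in polarDual r Y, f p ∂μ =
      (r ^ (finrank ℝ E + k) / (finrank ℝ E + k)! : ℝ) • ∫ p, f p ∂polarMeasure μ Y := by
  rw [polarDual_eq_supportFun_le hY ⟨0, h0⟩, integral_polarMeasure hY]
  refine setIntegral_sublevel_eq_smul_integral_exp_neg (measurable_supportFun hY) (fun p ↦ ?_)
    (fun t ht ↦ supportFun_smul ht.le) hf ((integrable_polarMeasure_iff hY).1 hint) hr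
  simpa using inner_le_supportFun hY h0 p

theorem measure_polarDual (hY : IsBounded Y) (h0 : 0 ∈ interior Y) (hr : 0 < r) :
    μ (polarDual r Y) =
      ENNReal.ofReal (r ^ finrank ℝ E / (finrank ℝ E)!) * polarMeasure μ Y univ := by
  have := isFiniteMeasure_polarMeasure (μ := μ) hY h0
  have hreal := setIntegral_polarDual (μ := μ) hY (interior_subset h0) hr (f := fun _ ↦ (1 : ℝ))
    (k := 0) (by simp) (integrable_const 1)
  simp only [integral_const, measureReal_restrict_apply_univ, smul_eq_mul, mul_one,
    add_zero] at hreal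
  rw [← ofReal_measureReal (isBounded_polarDual h0).measure_lt_top.ne, hreal,
    ENNReal.ofReal_mul (by positivity), ofReal_measureReal]

theorem setAverage_polarDual_eq_zero_iff (hY : IsBounded Y) (h0 : 0 ∈ interior Y) (hr : 0 < r) :
    ⨍ p in polarDual r Y, p ∂μ = 0 ↔ ∫ p, p ∂polarMeasure μ Y = 0 := by
  have := isFiniteMeasure_polarMeasure (μ := μ) hY h0
  have := isOpenPosMeasure_polarMeasure (μ := μ) hY
  have hvol : μ.real (polarDual r Y) ≠ 0 := by
    have hpos : 0 < ENNReal.ofReal (r ^ finrank ℝ E / (finrank ℝ E)!) :=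
      ENNReal.ofReal_pos.2 (by positivity)
    rw [measureReal_ne_zero_iff (isBounded_polarDual h0).measure_lt_top.ne,
      measure_polarDual hY h0 hr]
    exact mul_ne_zero hpos.ne' (isOpen_univ.measure_ne_zero _ univ_nonempty)
  have hid : Integrable (fun p ↦ p) (polarMeasure μ Y) := integrable_id_of_laplaceTransform_ne_top
    (zero_mem_interior_laplaceTransform_polarMeasure_ne_top hY h0)
  rw [setAverage_eq, smul_eq_zero_iff_right (inv_ne_zero hvol),
    setIntegral_polarDual hY (interior_subset h0) hr (k := 1) (by simp) hid,
    smul_eq_zero_iff_right (by positivity)]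

theorem setAverage_polarDual_image_sub_eq_zero_of_isMin (hX : IsBounded X) (hr : 0 < r)
    (hx : x ∈ interior X) (hmin : ∀ y,
      laplaceTransform (polarMeasure μ X) x ≤ laplaceTransform (polarMeasure μ X) y) :
    ⨍ p in polarDual r ((fun y ↦ y - x) '' X), p ∂μ = 0 := by
  have hX' := isBounded_image_sub hX x
  have h0 := zero_mem_interior_image_sub hx
  refine (setAverage_polarDual_eq_zero_iff hX' h0 hr).2
    (integral_id_eq_zero_of_isMinOn_laplaceTransform
      (zero_mem_interior_laplaceTransform_polarMeasure_ne_top hX' h0) fun z ↦ ?_)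
  simpa only [laplaceTransform_polarMeasure_image_sub hX ⟨x, interior_subset hx⟩, add_zero]
    using hmin (x + z)

theorem laplaceTransform_polarMeasure_lt_of_setAverage_eq_zero (hX : IsBounded X) (hr : 0 < r)
    (hx : x ∈ interior X) (hzero : ⨍ p in polarDual r ((fun y ↦ y - x) '' X), p ∂μ = 0) {y : E}
    (hxy : x ≠ y) :
    laplaceTransform (polarMeasure μ X) x < laplaceTransform (polarMeasure μ X) y := by
  have hX' := isBounded_image_sub hX x
  have h0 := zero_mem_interior_image_sub hx
  have := isFiniteMeasure_polarMeasure (μ := μ) hX' h0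
  have := isOpenPosMeasure_polarMeasure (μ := μ) hX'
  have hlt := laplaceTransform_zero_lt_of_integral_id_eq_zero
    (integrable_id_of_laplaceTransform_ne_top
      (zero_mem_interior_laplaceTransform_polarMeasure_ne_top hX' h0))
    ((setAverage_polarDual_eq_zero_iff hX' h0 hr).1 hzero) (sub_ne_zero.2 hxy.symm)
  simpa only [laplaceTransform_polarMeasure_image_sub hX ⟨x, interior_subset hx⟩, add_zero,
    add_sub_cancel] using hlt

theorem measure_polarDual_image_sub (hX : IsBounded X) (hx : x ∈ interior X) (hr : 0 < r) :
    μ (polarDual r ((fun y ↦ y - x) '' X)) =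
      ENNReal.ofReal (r ^ finrank ℝ E / (finrank ℝ E)!) *
        laplaceTransform (polarMeasure μ X) x := by
  rw [measure_polarDual (isBounded_image_sub hX x) (zero_mem_interior_image_sub hx) hr,
    ← laplaceTransform_zero, laplaceTransform_polarMeasure_image_sub hX ⟨x, interior_subset hx⟩,
    add_zero]

theorem santalo_point_general (μ : Measure E) [μ.IsAddHaarMeasure] (hr : 0 < r)
    (hX : IsBounded X) (hconv : Convex ℝ X) (hint : (interior X).Nonempty) :
    (∃! x, x ∈ interior X ∧ ⨍ p in polarDual r ((fun y ↦ y - x) '' X), p ∂μ = 0) ∧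
      ∀ x ∈ interior X, ⨍ p in polarDual r ((fun y ↦ y - x) '' X), p ∂μ = 0 →
        ∀ y ∈ interior X, μ (polarDual r ((fun z ↦ z - x) '' X)) ≤
          μ (polarDual r ((fun z ↦ z - y) '' X)) := by
  refine ⟨?_, fun x hx hzero y hy ↦ ?_⟩
  · obtain ⟨x, hx, hmin⟩ := exists_forall_laplaceTransform_polarMeasure_le (μ := μ) hX hconv hint
    refine ⟨x, ⟨hx, setAverage_polarDual_image_sub_eq_zero_of_isMin hX hr hx hmin⟩, ?_⟩
    rintro y ⟨hy, hzero⟩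
    by_contra hne
    exact (hmin y).not_gt
      (laplaceTransform_polarMeasure_lt_of_setAverage_eq_zero hX hr hy hzero hne)
  · rcases eq_or_ne x y with rfl | hxy
    · rfl
    rw [measure_polarDual_image_sub hX hx hr, measure_polarDual_image_sub hX hy hr]
    gcongr
    exact (laplaceTransform_polarMeasure_lt_of_setAverage_eq_zero hX hr hx hzero hxy).le

end Polar

theorem polarDualSet_eq_polarDual (n : ℕ) (r : ℝ) (Y : Set (EuclideanSpace ℝ (Fin n))) :
    polarDualSet n r Y = polarDual r Y :=
  rfl

theorem setCentroid_eq_setAverage (n : ℕ) (K : Set (EuclideanSpace ℝ (Fin n))) :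
    setCentroid n K = ⨍ p in K, p :=
  (setAverage_eq _ _ _).symm

/-- **Santaló point.** For a convex body `X ⊂ ℝⁿ` there is a unique interior point `x_S`
such that the polar body `(X − x_S)^ħ` has centroid `0`; moreover for this point the volume
`Vol((X − x_S)^ħ)` is minimal among all `Vol((X − x₀)^ħ)` with `x₀` interior to `X`. -/
theorem santalo_point (n : ℕ) (hb : ℝ) (hhb : 0 < hb)
    (X : Set (EuclideanSpace ℝ (Fin n)))
    (hXc : IsCompact X) (hXconv : Convex ℝ X) (hXint : (interior X).Nonempty) :
    (∃! xS : EuclideanSpace ℝ (Fin n), xS ∈ interior X ∧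
        setCentroid n (polarDualSet n hb ((fun y => y - xS) '' X)) = 0) ∧
      ∀ xS : EuclideanSpace ℝ (Fin n), xS ∈ interior X →
        setCentroid n (polarDualSet n hb ((fun y => y - xS) '' X)) = 0 →
        ∀ x₀ ∈ interior X,
          volume (polarDualSet n hb ((fun y => y - xS) '' X)) ≤
            volume (polarDualSet n hb ((fun y => y - x₀) '' X)) := by
  simpa only [setCentroid_eq_setAverage, polarDualSet_eq_polarDual] using
    santalo_point_general volume hhb hXc.isBounded hXconv hXint
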